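/- Let K be a field, n ≥ 1, let f₂ and f₃ be homogeneous polynomials of degrees 2 and 3 over K in the variables x₁,…,x_{n+1}, and set F = x₀·f₂ + f₃. Suppose W′ ⊆ K^{n+1} is a 2-dimensional linear subspace and φ: K² → W′ a linear parametrization such that the binary form g₂ = f₂∘φ is not identically zero and g₂ divides g₃ = f₃∘φ in K[s,t]. Then there exists a 2-dimensional linear subspace W ⊆ K^{n+2} not containing (1,0,…,0), mapping isomorphically onto W′ under the projection forgetting x₀, on which F vanishes identically; in fact W = {(ψ(u), u) : u ∈ W′} where ψ is the linear form on W′ with f₃ = −ψ·f₂ on W′. (Geometrically: every secant of Q ∩ C not contained in Q is the projection from the node of a line on X₀ = {F = 0} not passing through the node.) -/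

import Mathlib

/-!
By homogeneity the cofactor of `g₂` in `g₃` can be replaced by its degree-one component
(`exists_linear_cofactor`), so `g₃ = g₂ * l` with `l` a linear form on `K²`. Since
`dim W' = 2`, the parametrization `φ` is an isomorphism onto `W'`, and `l` transports to a linear
form on `W'`; let `ψ` be its negative. Then `f₃ = -ψ f₂` on `W'`, so
`F (ψ u, u) = ψ u * f₂ u + f₃ u = 0`, and the graph of `ψ` is the required subspace. It misses
`(1, 0, …, 0)` because a point of the graph with `u = 0` is zero.
-/

open MvPolynomial

/-- The cubic form `F = x₀ · f₂(x₁,…,x_{n+1}) + f₃(x₁,…,x_{n+1})` in the variables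
`x₀, …, x_{n+1}`, where `f₂` and `f₃` are polynomials in the variables `x₁, …, x_{n+1}`
(renamed into the last `n+1` of the `n+2` variables via `Fin.succ`). -/
noncomputable def nodalCubicForm {K : Type} [CommRing K] {n : ℕ}
    (f₂ f₃ : MvPolynomial (Fin (n + 1)) K) : MvPolynomial (Fin (n + 2)) K :=
  X 0 * rename Fin.succ f₂ + rename Fin.succ f₃

/-- Substitution of the linear parametrization `φ : K² → K^{n+1}` into a polynomial in
`n+1` variables, producing a binary form in the variables `s = X 0`, `t = X 1`:
each variable `xᵢ` is replaced by the linear form `φ(s,t)ᵢ`. -/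
noncomputable def substLinear (K : Type) [CommRing K] {n : ℕ}
    (φ : (Fin 2 → K) →ₗ[K] (Fin (n + 1) → K)) :
    MvPolynomial (Fin (n + 1)) K →ₐ[K] MvPolynomial (Fin 2) K :=
  aeval (fun i => ∑ j : Fin 2, C (φ (Pi.single j 1) i) * X j)

/-- A quotient of a cubic form by a quadratic form may be taken to be a linear form: only the
degree-one component of the cofactor contributes to the product in degree three. This is an
identity of polynomials, so it remains meaningful over finite fields. -/
lemma exists_linear_cofactor {K : Type} [Field K] {σ : Type} {g₂ g₃ : MvPolynomial σ K}
    (h₂ : g₂.IsHomogeneous 2) (h₃ : g₃.IsHomogeneous 3) (h : g₂ ∣ g₃) :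
    ∃ l : MvPolynomial σ K, l.IsHomogeneous 1 ∧ g₃ = g₂ * l := by
  let _ : GradedAlgebra (homogeneousSubmodule σ K) := gradedAlgebra
  obtain ⟨q, rfl⟩ := h
  refine ⟨DirectSum.decompose (homogeneousSubmodule σ K) q 1,
    (DirectSum.decompose (homogeneousSubmodule σ K) q 1).2, ?_⟩
  rw [← DirectSum.coe_decompose_mul_add_of_left_mem (homogeneousSubmodule σ K) (i := 2) h₂]
  exact (DirectSum.decompose_of_mem_same (homogeneousSubmodule σ K) h₃).symm

lemma exists_eval_eq_linearMap {K : Type} [Field K] {σ : Type} {l : MvPolynomial σ K}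
    (hl : l.IsHomogeneous 1) : ∃ L : (σ → K) →ₗ[K] K, ∀ v, eval v l = L v := by
  rw [← mem_homogeneousSubmodule, homogeneousSubmodule_one_eq_span_X] at hl
  induction hl using Submodule.span_induction with
  | mem x hx =>
    obtain ⟨i, rfl⟩ := hx
    exact ⟨LinearMap.proj i, fun v => by simp⟩
  | zero => exact ⟨0, fun v => by simp⟩
  | add x y _ _ hx hy =>
    obtain ⟨L, hL⟩ := hx
    obtain ⟨M, hM⟩ := hy
    exact ⟨L + M, fun v => by simp [hL, hM]⟩
  | smul c x _ hx =>
    obtain ⟨L, hL⟩ := hx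
    exact ⟨c • L, fun v => by simp [smul_eval, hL]⟩

lemma eval_substLinear {K : Type} [Field K] {n : ℕ}
    (φ : (Fin 2 → K) →ₗ[K] (Fin (n + 1) → K)) (f : MvPolynomial (Fin (n + 1)) K)
    (v : Fin 2 → K) : eval v (substLinear K φ f) = eval (φ v) f := by
  have hv : φ v = fun i => ∑ j : Fin 2, φ (Pi.single j 1) i * v j := by
    conv_lhs => rw [pi_eq_sum_univ' v]
    ext i
    simp [mul_comm]
  rw [hv, substLinear, ← coe_aeval_eq_eval, ← coe_aeval_eq_eval]
  simp only [RingHom.coe_coe]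
  rw [← AlgHom.comp_apply, comp_aeval]
  simp

lemma isHomogeneous_substLinear {K : Type} [Field K] {n d : ℕ}
    (φ : (Fin 2 → K) →ₗ[K] (Fin (n + 1) → K)) {f : MvPolynomial (Fin (n + 1)) K}
    (hf : f.IsHomogeneous d) : (substLinear K φ f).IsHomogeneous d := by
  have h := hf.aeval (fun i => ∑ j : Fin 2, C (φ (Pi.single j 1) i) * X j) (n := 1)
    fun i => IsHomogeneous.sum _ _ _ fun j _ => by
      simpa using (isHomogeneous_C (Fin 2) (φ (Pi.single j 1) i)).mul (isHomogeneous_X K j)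
  rwa [one_mul] at h

lemma eval_nodalCubicForm {K : Type} [Field K] {n : ℕ} (f₂ f₃ : MvPolynomial (Fin (n + 1)) K)
    (a : K) (u : Fin (n + 1) → K) :
    eval (Fin.cons a u : Fin (n + 2) → K) (nodalCubicForm f₂ f₃) = a * eval u f₂ + eval u f₃ := by
  have hu : (Fin.cons a u : Fin (n + 2) → K) ∘ Fin.succ = u := by ext; simp
  simp [nodalCubicForm, eval_rename, hu]

/-- The graph map `u ↦ (ψ u, u)` of a linear form `ψ` on a subspace `W'`. -/
def graphMap {K : Type} [Field K] {n : ℕ} {W' : Submodule K (Fin (n + 1) → K)}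
    (ψ : ↥W' →ₗ[K] K) : ↥W' →ₗ[K] (Fin (n + 2) → K) where
  toFun u := Fin.cons (ψ u) (u : Fin (n + 1) → K)
  map_add' u v := by ext i; refine Fin.cases ?_ (fun j => ?_) i <;> simp
  map_smul' c u := by ext i; refine Fin.cases ?_ (fun j => ?_) i <;> simp

/-- Lemma 2, second half (Finashin–Kharlamov): every secant of `Q ∩ C` not contained in
`Q` is the projection from the node of a line on `X₀ = {x₀·f₂ + f₃ = 0}` not passing
through the node.  If `W′ ⊆ K^{n+1}` is 2-dimensional with linear parametrization `φ`
such that `g₂ = f₂∘φ ≠ 0` divides `g₃ = f₃∘φ`, then there is a 2-dimensional subspace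
`W ⊆ K^{n+2}` avoiding `(1,0,…,0)`, projecting onto `W′`, on which `F = x₀·f₂ + f₃`
vanishes identically; explicitly `W = {(ψ(u), u) : u ∈ W′}` for the linear form `ψ` on
`W′` with `f₃ = -ψ·f₂` on `W′`. -/
theorem secant_lifts_to_line (K : Type) [Field K] (n : ℕ) (hn : 1 ≤ n)
    (f₂ f₃ : MvPolynomial (Fin (n + 1)) K)
    (hf₂ : f₂.IsHomogeneous 2) (hf₃ : f₃.IsHomogeneous 3)
    (W' : Submodule K (Fin (n + 1) → K)) (hW'2 : Module.finrank K W' = 2)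
    (φ : (Fin 2 → K) →ₗ[K] (Fin (n + 1) → K)) (hφ : LinearMap.range φ = W')
    (hg₂ : substLinear K φ f₂ ≠ 0)
    (hdvd : substLinear K φ f₂ ∣ substLinear K φ f₃) :
    ∃ W : Submodule K (Fin (n + 2) → K), Module.finrank K W = 2 ∧
      (Pi.single 0 1 : Fin (n + 2) → K) ∉ W ∧
      W.map (LinearMap.funLeft K K Fin.succ) = W' ∧
      (∀ w ∈ W, eval w (nodalCubicForm f₂ f₃) = 0) ∧
      ∃ ψ : ↥W' →ₗ[K] K,
        (∀ u : ↥W', eval (u : Fin (n + 1) → K) f₃ = -(ψ u) * eval (u : Fin (n + 1) → K) f₂) ∧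
        (W : Set (Fin (n + 2) → K)) =
          {x | ∃ u : ↥W', x = Fin.cons (ψ u) (u : Fin (n + 1) → K)} := by
  obtain ⟨l, hl, hg₃⟩ := exists_linear_cofactor (isHomogeneous_substLinear φ hf₂)
    (isHomogeneous_substLinear φ hf₃) hdvd
  obtain ⟨L, hL⟩ := exists_eval_eq_linearMap hl
  subst hφ
  -- Equality of dimensions makes the parametrization bijective onto its range.
  have hinj : Function.Injective φ := by
    rw [← LinearMap.ker_eq_bot, ← Submodule.finrank_eq_zero]
    have h := LinearMap.finrank_range_add_finrank_ker φ
    rw [hW'2, Module.finrank_fin_fun] at h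
    omega
  let e := LinearEquiv.ofInjective φ hinj
  let ψ : ↥(LinearMap.range φ) →ₗ[K] K := -(L ∘ₗ e.symm.toLinearMap)
  have hψ : ∀ u : ↥(LinearMap.range φ), eval (u : Fin (n + 1) → K) f₃ =
      -(ψ u) * eval (u : Fin (n + 1) → K) f₂ := by
    intro u
    obtain ⟨v, rfl⟩ := e.surjective u
    have h := congrArg (eval v) hg₃
    rw [map_mul, eval_substLinear, eval_substLinear, hL] at h
    simpa [ψ, e, mul_comm] using h
  have hginj : Function.Injective (graphMap ψ) := fun u v h =>
    Subtype.ext (funext fun i => by simpa [graphMap] using congrFun h i.succ)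
  refine ⟨LinearMap.range (graphMap ψ), ?_, ?_, ?_, ?_, ψ, hψ, ?_⟩
  · rw [LinearMap.finrank_range_of_inj hginj, hW'2]
  · rintro ⟨u, hu⟩
    have hu0 : u = 0 := by
      ext i
      simpa [graphMap] using congrFun hu i.succ
    subst hu0
    simpa using congrFun hu 0
  · rw [← LinearMap.range_comp]
    have hcomp : LinearMap.funLeft K K Fin.succ ∘ₗ graphMap ψ =
        (LinearMap.range φ).subtype := by
      ext u i
      simp [graphMap, LinearMap.funLeft]
    rw [hcomp, Submodule.range_subtype]
  · rintro _ ⟨u, rfl⟩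
    change eval (Fin.cons (ψ u) (u : Fin (n + 1) → K)) _ = 0
    rw [eval_nodalCubicForm, hψ u]
    ring
  · ext x
    exact ⟨fun ⟨u, hu⟩ => ⟨u, hu.symm⟩, fun ⟨u, hu⟩ => ⟨u, hu.symm⟩⟩
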